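/- Let G = (V,E) be a finite connected undirected graph with positive symmetric edge weights ω, and let κ_{ij} = h_{ij} + h_{ji} denote the commute time between two vertices i and j. Then κ_{ij} = 2·ω(G)·R_{ij}, where R_{ij} is the effective resistance between i and j and ω(G) is the total edge weight of G. -/

import Mathlib

open Finset

variable {V : Type*}

/-- The total weight incident to a vertex: `ω(i) = Σ_l ω(i,l)`. -/
noncomputable def vWeight [Fintype V] (w : V → V → ℝ) (i : V) : ℝ :=
  ∑ l, w i l

/-- The total weight of the graph (each edge counted once): `ω(G)`. -/
noncomputable def gWeight [Fintype V] (w : V → V → ℝ) : ℝ :=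
  (∑ i, ∑ l, w i l) / 2

/-- Transition probabilities of the random walk on the weighted graph:
from `i`, move to `l` with probability `ω(i,l)/ω(i)`. -/
noncomputable def walkStep [Fintype V] (w : V → V → ℝ) (i l : V) : ℝ :=
  w i l / vWeight w i

/-- `w` is a system of positive symmetric edge weights on a finite connected undirected
graph: symmetric, nonnegative, zero on the diagonal (and on non-edges), and the graph
whose edges are the pairs with positive weight is connected. -/
def IsWeight [Fintype V] (w : V → V → ℝ) : Prop :=
  (∀ a b, w a b = w b a) ∧ (∀ a b, 0 ≤ w a b) ∧ (∀ a, w a a = 0) ∧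
    (∀ a b, Relation.ReflTransGen (fun x y => 0 < w x y) a b)

/-- `hitSurv p j n i` is the probability that the Markov chain with transition kernel `p`
started at `i` has not visited `j` at any of the times `0, 1, …, n`. -/
noncomputable def hitSurv {S : Type*} [Fintype S] [DecidableEq S] (p : S → S → ℝ) (j : S) :
    ℕ → S → ℝ
  | 0 => fun i => if i = j then 0 else 1
  | n + 1 => fun i => if i = j then 0 else ∑ l, p i l * hitSurv p j n l

/-- Expected hitting time of `j` from `i`: the expected number of steps for the chain
started at `i` to first reach `j`, computed as `Σ_n P(T_j > n)`. -/
noncomputable def hitTime {S : Type*} [Fintype S] [DecidableEq S] (p : S → S → ℝ)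
    (i j : S) : ℝ :=
  ∑' n : ℕ, hitSurv p j n i

/-- A unit-current potential from `i` to `j`: Kirchhoff's equations when a unit current
enters at `i` and leaves at `j`. -/
def IsUnitPotential [Fintype V] (w : V → V → ℝ) (i j : V) (φ : V → ℝ) : Prop :=
  (∀ k, k ≠ i → k ≠ j → ∑ l, w k l * (φ k - φ l) = 0) ∧
    (∑ l, w i l * (φ i - φ l) = 1) ∧
    (∑ l, w j l * (φ j - φ l) = -1)

/-- `R` is the effective-resistance matrix of the weighted graph `w`:
`R a a = 0`, and for `a ≠ b`, `R a b = V_a - V_b` for a unit-current potential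
from `a` to `b`. -/
def IsResistance [Fintype V] (w : V → V → ℝ) (R : V → V → ℝ) : Prop :=
  (∀ a, R a a = 0) ∧
    ∀ a b, a ≠ b → ∃ φ, IsUnitPotential w a b φ ∧ R a b = φ a - φ b

/-- The weight function of an unweighted graph: weight `1` on edges, `0` elsewhere. -/
noncomputable def aw (G : SimpleGraph V) [DecidableRel G.Adj] (a b : V) : ℝ :=
  if G.Adj a b then 1 else 0

/-- Probability of a given trajectory: `trajProb p i xs` is the probability that the
chain started at `i` successively visits the vertices of the list `xs`. -/
noncomputable def trajProb {S : Type*} [Fintype S] (p : S → S → ℝ) : S → List S → ℝ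
  | _, [] => 1
  | i, x :: xs => p i x * trajProb p x xs

/-- Probability that the walk started at `i` has not visited every vertex by time `n`. -/
noncomputable def notCoveredProb [Fintype V] [DecidableEq V] (p : V → V → ℝ) (n : ℕ)
    (i : V) : ℝ :=
  ∑ xs : Fin n → V, trajProb p i (List.ofFn xs) *
    (if (i :: List.ofFn xs).toFinset = Finset.univ then 0 else 1)

/-- The cover time from `i`: the expected number of steps for the walk started at `i`
to have visited every vertex, computed as `Σ_n P(T_cov > n)`. -/
noncomputable def coverTime [Fintype V] [DecidableEq V] (p : V → V → ℝ) (i : V) : ℝ :=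
  ∑' n : ℕ, notCoveredProb p n i

/-- `visitSurv p j k n i` is the probability that the chain started at `i` is at `k` at
time `n` without having visited `j` at any of the times `0, …, n`. -/
noncomputable def visitSurv [Fintype V] [DecidableEq V] (p : V → V → ℝ) (j k : V) :
    ℕ → V → ℝ
  | 0 => fun i => if i = j then 0 else if i = k then 1 else 0
  | n + 1 => fun i => if i = j then 0 else ∑ l, p i l * visitSurv p j k n l

/-- `expVisits p i j k` is the expected number of visits to `k` (counting time `0`) of
the chain started at `i` strictly before its first visit to `j`. -/
noncomputable def expVisits [Fintype V] [DecidableEq V] (p : V → V → ℝ) (i j k : V) : ℝ :=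
  ∑' n : ℕ, visitSurv p j k n i

/-- `reachBeforeAux p i j n l` is the probability that the walk started at `l` reaches `j`
within `n` steps without visiting `i` first. -/
noncomputable def reachBeforeAux [Fintype V] [DecidableEq V] (p : V → V → ℝ) (i j : V) :
    ℕ → V → ℝ
  | 0 => fun l => if l = j then 1 else 0
  | n + 1 => fun l =>
      if l = j then 1 else if l = i then 0 else ∑ m, p l m * reachBeforeAux p i j n m

/-- The probability that the walk started at `i` reaches `j` before returning to `i`:
one step from `i` to `l`, then reach `j` before `i` (monotone limit in `n`). -/
noncomputable def escapeProb [Fintype V] [DecidableEq V] (p : V → V → ℝ) (i j : V) : ℝ :=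
  ∑ l, p i l * ⨆ n, reachBeforeAux p i j n l

/-- `hitSurvSet p F n x` is the probability that the chain started at `x` has not visited
the set `F` at any of the times `0, …, n`. -/
noncomputable def hitSurvSet {S : Type*} [Fintype S] (p : S → S → ℝ) (F : S → Prop)
    [DecidablePred F] : ℕ → S → ℝ
  | 0 => fun x => if F x then 0 else 1
  | n + 1 => fun x => if F x then 0 else ∑ y, p x y * hitSurvSet p F n y

/-- Expected hitting time of the set `F` from `x`, computed as `Σ_n P(T_F > n)`. -/
noncomputable def hitTimeSet {S : Type*} [Fintype S] (p : S → S → ℝ) (F : S → Prop)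
    [DecidablePred F] (x : S) : ℝ :=
  ∑' n : ℕ, hitSurvSet p F n x

/-- The associated chain `𝒢` on pairs `(P, i)` (visited set, current vertex): from
`(P, i)` it moves to `(P ∪ {j}, j)` with probability `ω(i,j)/ω(i)`. -/
noncomputable def pairStep [Fintype V] [DecidableEq V] (w : V → V → ℝ)
    (s t : Finset V × V) : ℝ :=
  if t.1 = insert t.2 s.1 then walkStep w s.2 t.2 else 0

/-- `exitProbAux p P j n i` is the probability that the walk started at `i` leaves `P`
within `n` steps and that the first vertex visited outside `P` is `j`. -/
noncomputable def exitProbAux [Fintype V] [DecidableEq V] (p : V → V → ℝ) (P : Finset V)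
    (j : V) : ℕ → V → ℝ
  | 0 => fun i => if i ∈ P then 0 else if i = j then 1 else 0
  | n + 1 => fun i =>
      if i ∈ P then ∑ l, p i l * exitProbAux p P j n l else if i = j then 1 else 0

/-- The probability that the first vertex outside `P` visited by the walk started at `i`
is `j` (monotone limit in the number of allowed steps). -/
noncomputable def exitProb [Fintype V] [DecidableEq V] (p : V → V → ℝ) (P : Finset V)
    (i j : V) : ℝ :=
  ⨆ n, exitProbAux p P j n i

/-- The negated weighted Laplacian `Δ` of the weighted graph `w` on `Fin n`. -/
noncomputable def negLaplacian (n : ℕ) (w : Fin n → Fin n → ℝ) :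
    Matrix (Fin n) (Fin n) ℝ :=
  Matrix.of fun k l => if k = l then -(∑ m, w k m) else w k l

/-- `Δ₂`: the negated weighted Laplacian with its first row replaced by the first row of
the identity matrix. -/
noncomputable def delta2 (n : ℕ) (hn : 0 < n) (w : Fin n → Fin n → ℝ) :
    Matrix (Fin n) (Fin n) ℝ :=
  (negLaplacian n w).updateRow ⟨0, hn⟩ (fun l => if l = ⟨0, hn⟩ then 1 else 0)

/-- The weight function obtained from `w` by adding weight `u` on the edge `{a, b}`. -/
noncomputable def addEdge [DecidableEq V] (w : V → V → ℝ) (a b : V) (u : ℝ)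
    (x y : V) : ℝ :=
  w x y + (if (x = a ∧ y = b) ∨ (x = b ∧ y = a) then u else 0)

section HittingTimes

variable [Fintype V] {w : V → V → ℝ}

/-- The weighted graph Laplacian. -/
noncomputable def weightedLaplacian (w : V → V → ℝ) (f : V → ℝ) (k : V) : ℝ :=
  ∑ l, w k l * (f k - f l)

lemma weightedLaplacian_eq (w : V → V → ℝ) (f : V → ℝ) (k : V) :
    weightedLaplacian w f k = vWeight w k * f k - ∑ l, w k l * f l := by
  simp only [weightedLaplacian, vWeight, mul_sub, Finset.sum_sub_distrib, Finset.sum_mul]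

lemma sum_mul_weightedLaplacian_comm (hs : ∀ a b, w a b = w b a) (f g : V → ℝ) :
    ∑ k, f k * weightedLaplacian w g k = ∑ k, g k * weightedLaplacian w f k := by
  have hcomm : ∑ k, ∑ l, f k * (w k l * g l) = ∑ k, ∑ l, g k * (w k l * f l) := by
    rw [Finset.sum_comm]
    refine Finset.sum_congr rfl fun k _ => Finset.sum_congr rfl fun l _ => ?_
    rw [hs l k]; ring
  simp only [weightedLaplacian_eq, mul_sub, Finset.sum_sub_distrib, Finset.mul_sum, hcomm]
  congr 1
  exact Finset.sum_congr rfl fun k _ => by ring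

lemma sum_weightedLaplacian (hs : ∀ a b, w a b = w b a) (f : V → ℝ) :
    ∑ k, weightedLaplacian w f k = 0 := by
  have h := sum_mul_weightedLaplacian_comm hs (fun _ => 1) f
  simpa [weightedLaplacian] using h

lemma two_mul_gWeight (w : V → V → ℝ) : 2 * gWeight w = ∑ k, vWeight w k := by
  simp only [gWeight, vWeight]; ring

lemma vWeight_mul_sum_walkStep {k : V} (hk : vWeight w k ≠ 0) (f : V → ℝ) :
    vWeight w k * ∑ l, walkStep w k l * f l = ∑ l, w k l * f l := by
  rw [Finset.mul_sum]
  refine Finset.sum_congr rfl fun l _ => ?_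
  rw [walkStep]
  field_simp

lemma IsWeight.vWeight_nonneg (hw : IsWeight w) (k : V) : 0 ≤ vWeight w k :=
  Finset.sum_nonneg fun l _ => hw.2.1 k l

lemma IsWeight.walkStep_nonneg (hw : IsWeight w) (k l : V) : 0 ≤ walkStep w k l :=
  div_nonneg (hw.2.1 k l) (hw.vWeight_nonneg k)

lemma IsWeight.vWeight_pos (hw : IsWeight w) {k j : V} (hkj : k ≠ j) : 0 < vWeight w k := by
  rcases (hw.2.2.2 k j).cases_head with h | ⟨l, hl, -⟩
  · exact absurd h hkj
  · exact hl.trans_le (Finset.single_le_sum (fun m _ => hw.2.1 k m) (Finset.mem_univ l))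

variable [DecidableEq V]

lemma hitSurv_self (p : V → V → ℝ) (j : V) (n : ℕ) : hitSurv p j n j = 0 := by
  cases n <;> simp [hitSurv]

lemma hitSurv_nonneg {p : V → V → ℝ} (hp : ∀ a b, 0 ≤ p a b) (j : V) (n : ℕ) (k : V) :
    0 ≤ hitSurv p j n k := by
  induction n generalizing k with
  | zero => simp only [hitSurv]; split_ifs <;> norm_num
  | succ n ih =>
    simp only [hitSurv]
    split_ifs
    · exact le_rfl
    · exact Finset.sum_nonneg fun l _ => mul_nonneg (hp k l) (ih l)

/-- The mass of the surviving walk, weighted by `vWeight`, drops at each step by the flow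
into `j`. -/
lemma IsWeight.sum_vWeight_mul_hitSurv_succ (hw : IsWeight w) (j : V) (n : ℕ) :
    ∑ k, vWeight w k * hitSurv (walkStep w) j (n + 1) k =
      ∑ k, vWeight w k * hitSurv (walkStep w) j n k -
        ∑ l, w j l * hitSurv (walkStep w) j n l := by
  have hstep : ∀ k, vWeight w k * hitSurv (walkStep w) j (n + 1) k =
      (∑ l, w k l * hitSurv (walkStep w) j n l) -
        if k = j then ∑ l, w j l * hitSurv (walkStep w) j n l else 0 := by
    intro k
    by_cases hk : k = j
    · subst hk; simp [hitSurv]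
    · simp [hitSurv, hk, vWeight_mul_sum_walkStep (hw.vWeight_pos hk).ne']
  simp only [hstep, Finset.sum_sub_distrib, Finset.sum_ite_eq', Finset.mem_univ, if_true]
  congr 1
  rw [Finset.sum_comm]
  refine Finset.sum_congr rfl fun k _ => ?_
  rw [vWeight, Finset.sum_mul]
  exact Finset.sum_congr rfl fun l _ => by rw [hw.1 l k]

lemma IsWeight.summable_flow (hw : IsWeight w) (j : V) :
    Summable fun n => ∑ l, w j l * hitSurv (walkStep w) j n l := by
  have hnn := hitSurv_nonneg hw.walkStep_nonneg j
  have hmass : ∀ n, 0 ≤ ∑ k, vWeight w k * hitSurv (walkStep w) j n k := fun n =>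
    Finset.sum_nonneg fun k _ => mul_nonneg (hw.vWeight_nonneg k) (hnn n k)
  refine summable_of_sum_range_le
    (c := ∑ k, vWeight w k * hitSurv (walkStep w) j 0 k)
    (fun n => Finset.sum_nonneg fun l _ => mul_nonneg (hw.2.1 j l) (hnn n l)) fun n => ?_
  have htel : ∑ m ∈ Finset.range n, ∑ l, w j l * hitSurv (walkStep w) j m l =
      ∑ k, vWeight w k * hitSurv (walkStep w) j 0 k -
        ∑ k, vWeight w k * hitSurv (walkStep w) j n k := by
    rw [← Finset.sum_range_sub' fun m => ∑ k, vWeight w k * hitSurv (walkStep w) j m k]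
    refine Finset.sum_congr rfl fun m _ => ?_
    rw [hw.sum_vWeight_mul_hitSurv_succ]; ring
  linarith [hmass n]

lemma IsWeight.summable_hitSurv (hw : IsWeight w) (j k : V) :
    Summable fun n => hitSurv (walkStep w) j n k := by
  have hnn := hitSurv_nonneg hw.walkStep_nonneg j
  induction hw.2.2.2 j k with
  | refl => simpa only [hitSurv_self] using summable_zero
  | @tail b c _ hbc ih =>
    by_cases hb : b = j
    · subst hb
      refine (summable_mul_left_iff hbc.ne').1 (Summable.of_nonneg_of_le
        (fun n => mul_nonneg hbc.le (hnn n c)) (fun n => ?_) (hw.summable_flow b))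
      exact Finset.single_le_sum (f := fun l => w b l * hitSurv (walkStep w) b n l)
        (fun l _ => mul_nonneg (hw.2.1 b l) (hnn n l)) (Finset.mem_univ c)
    · have hp : 0 < walkStep w b c := div_pos hbc (hw.vWeight_pos hb)
      refine (summable_mul_left_iff hp.ne').1 (Summable.of_nonneg_of_le
        (fun n => mul_nonneg hp.le (hnn n c)) (fun n => ?_) ((summable_nat_add_iff 1).2 ih))
      simp only [hitSurv, if_neg hb]
      exact Finset.single_le_sum (f := fun l => walkStep w b l * hitSurv (walkStep w) j n l)
        (fun l _ => mul_nonneg (hw.walkStep_nonneg b l) (hnn n l)) (Finset.mem_univ c)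

lemma hitTime_self (p : V → V → ℝ) (j : V) : hitTime p j j = 0 := by
  simp [hitTime, hitSurv_self]

lemma IsWeight.hitTime_eq_one_add (hw : IsWeight w) {j k : V} (hk : k ≠ j) :
    hitTime (walkStep w) k j = 1 + ∑ l, walkStep w k l * hitTime (walkStep w) l j := by
  unfold hitTime
  rw [(hw.summable_hitSurv j k).tsum_eq_zero_add]
  simp only [hitSurv, if_neg hk]
  rw [Summable.tsum_finsetSum fun l _ => (hw.summable_hitSurv j l).mul_left _]
  simp only [tsum_mul_left]

lemma IsWeight.weightedLaplacian_hitTime (hw : IsWeight w) (j k : V) :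
    weightedLaplacian w (fun l => hitTime (walkStep w) l j) k =
      vWeight w k - if k = j then 2 * gWeight w else 0 := by
  have hne : ∀ k, k ≠ j →
      weightedLaplacian w (fun l => hitTime (walkStep w) l j) k = vWeight w k := by
    intro k hk
    rw [weightedLaplacian_eq, ← vWeight_mul_sum_walkStep (hw.vWeight_pos hk).ne',
      hw.hitTime_eq_one_add hk]
    ring
  by_cases hk : k = j
  · subst hk
    have hsum := sum_weightedLaplacian hw.1 fun l => hitTime (walkStep w) l k
    rw [← Finset.add_sum_erase _ _ (Finset.mem_univ k),
      Finset.sum_congr rfl fun l hl => hne l (Finset.ne_of_mem_erase hl)] at hsum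
    rw [if_pos rfl, two_mul_gWeight, ← Finset.add_sum_erase _ _ (Finset.mem_univ k)]
    linarith
  · simp [hk, hne k hk]

lemma IsUnitPotential.weightedLaplacian_eq_ite {i j : V} (hij : i ≠ j) {φ : V → ℝ}
    (hφ : IsUnitPotential w i j φ) (k : V) :
    weightedLaplacian w φ k = (if k = i then 1 else 0) - if k = j then 1 else 0 := by
  unfold weightedLaplacian
  by_cases hi : k = i
  · subst hi; simpa [hij] using hφ.2.1
  · by_cases hj : k = j
    · subst hj; simpa [hi] using hφ.2.2
    · simpa [hi, hj] using hφ.1 k hi hj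

/-- Green's identity pairing a hitting time with a unit-current potential. -/
lemma IsWeight.hitTime_sub_hitTime (hw : IsWeight w) {i j : V} (hij : i ≠ j) {φ : V → ℝ}
    (hφ : IsUnitPotential w i j φ) (m : V) :
    hitTime (walkStep w) i m - hitTime (walkStep w) j m =
      ∑ k, φ k * vWeight w k - 2 * gWeight w * φ m := by
  have h := sum_mul_weightedLaplacian_comm hw.1 φ fun l => hitTime (walkStep w) l m
  simp only [hw.weightedLaplacian_hitTime, hφ.weightedLaplacian_eq_ite hij, mul_sub,
    Finset.sum_sub_distrib, mul_ite, mul_one, mul_zero, Finset.sum_ite_eq', Finset.mem_univ,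
    if_true] at h
  linarith

end HittingTimes

/-- Commute time and effective resistance: `κ_{ij} = 2·ω(G)·R_{ij}`. -/
theorem commute_time_resistance
    {V : Type*} [Fintype V] [DecidableEq V] (w : V → V → ℝ) (hw : IsWeight w)
    (i j : V) (hij : i ≠ j) (φ : V → ℝ) (hφ : IsUnitPotential w i j φ) :
    hitTime (walkStep w) i j + hitTime (walkStep w) j i =
      2 * gWeight w * (φ i - φ j) := by
  have h₁ := hw.hitTime_sub_hitTime hij hφ i
  have h₂ := hw.hitTime_sub_hitTime hij hφ j
  rw [hitTime_self] at h₁ h₂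
  linarith
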